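/- Let K be a field of characteristic p > 0, let a, b ∈ ℕ^m with a ≠ b and a_i + b_i ≥ 1 for every i, and let f = u_1 x^a + u_2 x^b with u_1, u_2 ∈ K nonzero. Suppose the splitting polytope P has a unique maximal point η = (η_1, η_2) with η_1 + η_2 ≤ 1, that L := sup{ N ∈ ℕ : η_1^(e) + η_2^(e) ≤ p−1 for all 1 ≤ e ≤ N } is finite, and set d := max{ e ≤ L : η_1^(e) + η_2^(e) ≤ p−2 }. If neither (⟨η_1⟩_d + 1/p^d, ⟨η_2⟩_d) nor (⟨η_1⟩_d, ⟨η_2⟩_d + 1/p^d) lies in P°_lower, then the F-pure threshold of f at m = (x_1,…,x_m) equals ⟨η_1 + η_2⟩_L; that is, ν_f(p^e)/p^e converges to ⟨η_1 + η_2⟩_L. -/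

import Mathlib

/-!
Since `a ≠ b`, the monomials `x ^ (k a + l b)` with `k + l = N` are distinct, so `f ^ N ∉ m^[q]`
holds exactly when some `k + l = N` satisfies `p ∤ (k + l).choose k` and `a i * k + b i * l < q` for
all `i` (`pow_notMem_frobeniusPower_iff`). By Lucas, `p ∤ (k + l).choose k` says that `k` and `l` add
without carrying in base `p`.

Let `A e, B e` be the numerators of the truncations `⟨η₁⟩ₑ, ⟨η₂⟩ₑ` and `T = A L + B L + 1`. The carry at
place `L + 1` gives `⟨η₁ + η₂⟩_L = T / p ^ L`, and the proof shows `ν(p ^ (L + n)) = p ^ n * T - 1`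
for every `n`.

* Lower bound: `A L` and `B L` add without carrying, and so do any `r + s = p ^ n - 1`. The carry at
  place `L + 1` leaves room to choose such `r, s` with `(p ^ n * A L + r, p ^ n * B L + s)` strictly
  below `p ^ (L + n) • η` in both coordinates.
* Upper bound: if `k + l ≥ p ^ n * T` without carrying, divide by `p ^ n`. All digit sums strictly
  between places `d` and `L + 1` equal `p - 1`, so `T = p ^ (L - d) * (A d + B d + 1)`, and dividing by
  `p ^ (L - d)` as well produces `(k', l') / p ^ d` in the lower interior with
  `k' + l' ≥ A d + B d + 1`. The segment from this point to the maximal point `η` has coordinate sums at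
  least `(A d + B d + 1) / p ^ d`; hence it passes above one of the two points of `hnot` (unless
  `(k', l') / p ^ d` already lies above one of them), and by convexity that point is in the lower interior.
-/

/-- The `q`-th Frobenius power `m^[q]` of the maximal ideal generated by the variables. -/
noncomputable def frobeniusPower (K : Type*) [CommRing K] (σ : Type*) (q : ℕ) :
    Ideal (MvPolynomial σ K) :=
  Ideal.span (Set.range fun i : σ => (MvPolynomial.X i : MvPolynomial σ K) ^ q)

/-- `ν_f(q) = max { l : f ^ l ∉ m^[q] }`. -/
noncomputable def nu {K : Type*} [CommRing K] {σ : Type*} (f : MvPolynomial σ K) (q : ℕ) : ℕ :=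
  sSup {l : ℕ | f ^ l ∉ frobeniusPower K σ q}


/-- The splitting polytope of the pair of exponent vectors `a, b : Fin m → ℕ`. -/
def splittingPolytope {m : ℕ} (a b : Fin m → ℕ) : Set (ℝ × ℝ) :=
  {s | 0 ≤ s.1 ∧ 0 ≤ s.2 ∧ ∀ i, (a i : ℝ) * s.1 + (b i : ℝ) * s.2 ≤ 1}

/-- The lower interior of the splitting polytope. -/
def lowerInterior {m : ℕ} (a b : Fin m → ℕ) : Set (ℝ × ℝ) :=
  {s | 0 ≤ s.1 ∧ 0 ≤ s.2 ∧ ∀ i, (a i : ℝ) * s.1 + (b i : ℝ) * s.2 < 1}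

/-- `η` is a maximal point of the splitting polytope: it maximizes the coordinate sum. -/
def isMaxPoint {m : ℕ} (a b : Fin m → ℕ) (η : ℝ × ℝ) : Prop :=
  η ∈ splittingPolytope a b ∧ ∀ s ∈ splittingPolytope a b, s.1 + s.2 ≤ η.1 + η.2


/-- The `e`-th truncation of `α ∈ (0,1]` in base `p`; by convention `⟨0⟩ₑ = 0`. -/
noncomputable def trunc (p e : ℕ) (α : ℝ) : ℝ :=
  if α = 0 then 0 else (⌈(p : ℝ) ^ e * α⌉ - 1) / (p : ℝ) ^ e

/-- The `e`-th digit (for `e ≥ 1`) of the non-terminating base-`p` expansion of `α`. -/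
noncomputable def digit (p e : ℕ) (α : ℝ) : ℝ :=
  (p : ℝ) ^ e * (trunc p e α - trunc p (e - 1) α)

/-! ### Addition without carrying -/

/-- Lucas' theorem in one step: removing the last base-`p` digits of `k` and `l`. -/
lemma not_dvd_choose_iff_div (p : ℕ) [hp : Fact p.Prime] (k l : ℕ) :
    ¬ p ∣ (k + l).choose k ↔ k % p + l % p < p ∧ ¬ p ∣ (k / p + l / p).choose (k / p) := by
  have hp0 := hp.out.pos
  have key := Choose.choose_modEq_choose_mod_mul_choose_div_nat (n := k + l) (k := k) (p := p)
  rw [(key.dvd_iff dvd_rfl), hp.out.dvd_mul, not_or]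
  have hk := Nat.mod_lt k hp0
  have hl := Nat.mod_lt l hp0
  rcases lt_or_ge (k % p + l % p) p with h | h
  · have h1 : (k + l) % p = k % p + l % p := by rw [Nat.add_mod, Nat.mod_eq_of_lt h]
    have h2 : (k + l) / p = k / p + l / p := Nat.add_div_eq_of_add_mod_lt h
    rw [h1, h2]
    have h3 : ¬ p ∣ (k % p + l % p).choose (k % p) := by
      intro hd
      have h4 := Nat.choose_mul_factorial_mul_factorial (Nat.le_add_right (k % p) (l % p))
      have h5 : p ∣ (k % p + l % p).factorial := by
        rw [← h4, mul_assoc]; exact hd.mul_right _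
      exact absurd ((hp.out.dvd_factorial).1 h5) (by omega)
    simp [h, h3]
  · have h1 : (k + l) % p = k % p + l % p - p := by
      rw [Nat.add_mod, Nat.mod_eq_sub_mod h, Nat.mod_eq_of_lt (by omega)]
    have h2 : ((k + l) % p).choose (k % p) = 0 := Nat.choose_eq_zero_of_lt (by omega)
    simp [h2, not_lt.2 h]

/-- Numbers that add without carrying still do so after dropping their last `n` digits, and
their sum is truncated accordingly. -/
lemma not_dvd_choose_div_pow (p : ℕ) [hp : Fact p.Prime] (n k l : ℕ)
    (h : ¬ p ∣ (k + l).choose k) :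
    ¬ p ∣ (k / p ^ n + l / p ^ n).choose (k / p ^ n) ∧
      (k + l) / p ^ n = k / p ^ n + l / p ^ n := by
  induction n with
  | zero => simpa using h
  | succ n ih =>
    obtain ⟨h1, h2⟩ := ih
    obtain ⟨h3, h4⟩ := (not_dvd_choose_iff_div p _ _).1 h1
    rw [pow_succ, ← Nat.div_div_eq_div_mul, ← Nat.div_div_eq_div_mul, ← Nat.div_div_eq_div_mul, h2]
    exact ⟨h4, Nat.add_div_eq_of_add_mod_lt h3⟩

/-- Appending `n` digits to each of `A` and `B` creates no carry if the digits in every new place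
sum to `p - 1`. -/
lemma not_dvd_choose_append (p : ℕ) [hp : Fact p.Prime] (A B : ℕ)
    (h : ¬ p ∣ (A + B).choose A) (n r s : ℕ) (hrs : r + s + 1 = p ^ n) :
    ¬ p ∣ ((p ^ n * A + r) + (p ^ n * B + s)).choose (p ^ n * A + r) := by
  induction n generalizing r s with
  | zero =>
    obtain ⟨rfl, rfl⟩ : r = 0 ∧ s = 0 := by rw [pow_zero] at hrs; omega
    simpa using h
  | succ n ih =>
    have hp0 := hp.out.pos
    have e1 : p ^ (n + 1) * A + r = p * (p ^ n * A) + r := by ring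
    have e2 : p ^ (n + 1) * B + s = p * (p ^ n * B) + s := by ring
    rw [not_dvd_choose_iff_div, e1, e2, Nat.mul_add_mod, Nat.mul_add_mod, Nat.mul_add_div hp0,
      Nat.mul_add_div hp0]
    have hr := Nat.mod_lt r hp0
    have hs := Nat.mod_lt s hp0
    have hr' := Nat.div_add_mod r p
    have hs' := Nat.div_add_mod s p
    rw [pow_succ'] at hrs
    -- `r % p + s % p + 1` is a multiple of `p` lying strictly between `0` and `2 * p`.
    have h1 : p * (r / p + s / p) + (r % p + s % p + 1) = p * p ^ n := by
      rw [← hrs, mul_add]; omega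
    have h2 : p ∣ r % p + s % p + 1 :=
      (Nat.dvd_add_right (dvd_mul_right _ _)).1 (h1 ▸ dvd_mul_right _ _)
    have h3 : r % p + s % p + 1 = p := by
      obtain ⟨c, hc⟩ := h2
      have h4 : c < 2 := by
        by_contra! h5
        have := Nat.mul_le_mul_left p h5
        omega
      interval_cases c <;> omega
    refine ⟨by omega, ih _ _ ?_⟩
    rw [h3] at h1
    exact Nat.eq_of_mul_eq_mul_left hp0 (by rw [← h1]; ring)

/-! ### Powers of a binomial -/

lemma mem_frobeniusPower_iff {K : Type*} [CommRing K] {σ : Type*} (q : ℕ)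
    (f : MvPolynomial σ K) :
    f ∈ frobeniusPower K σ q ↔ ∀ x ∈ f.support, ∃ i, q ≤ x i := by
  have h : frobeniusPower K σ q = Ideal.span ((fun s => MvPolynomial.monomial s (1 : K)) ''
      Set.range fun i : σ => Finsupp.single i q) := by
    unfold frobeniusPower
    rw [← Set.range_comp]
    congr 2
    funext i
    simp [MvPolynomial.X_pow_eq_monomial]
  rw [h, MvPolynomial.mem_ideal_span_monomial_image]
  simp [Finsupp.single_le_iff]

lemma pow_notMem_frobeniusPower_iff {K : Type*} [Field K] (p : ℕ) [CharP K p]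
    {m : ℕ} (a b : Fin m → ℕ) (hab : a ≠ b) (u1 u2 : K) (hu1 : u1 ≠ 0) (hu2 : u2 ≠ 0)
    (N q : ℕ) :
    (MvPolynomial.C u1 * ∏ i, MvPolynomial.X i ^ a i +
      MvPolynomial.C u2 * ∏ i, MvPolynomial.X i ^ b i) ^ N ∉ frobeniusPower K (Fin m) q ↔
    ∃ k l, k + l = N ∧ ¬ p ∣ (k + l).choose k ∧ ∀ i, a i * k + b i * l < q := by
  classical
  set α : Fin m →₀ ℕ := Finsupp.equivFunOnFinite.symm a with hα
  set β : Fin m →₀ ℕ := Finsupp.equivFunOnFinite.symm b with hβ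
  have ha : MvPolynomial.C u1 * ∏ i, MvPolynomial.X i ^ a i = MvPolynomial.monomial α u1 := by
    rw [MvPolynomial.monomial_eq, Finsupp.prod_fintype _ _ (by simp)]; simp [hα]
  have hb : MvPolynomial.C u2 * ∏ i, MvPolynomial.X i ^ b i = MvPolynomial.monomial β u2 := by
    rw [MvPolynomial.monomial_eq, Finsupp.prod_fintype _ _ (by simp)]; simp [hβ]
  rw [ha, hb]
  have hexp : (MvPolynomial.monomial α u1 + MvPolynomial.monomial β u2) ^ N =
      ∑ k ∈ Finset.range (N + 1), MvPolynomial.monomial (k • α + (N - k) • β)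
        (u1 ^ k * u2 ^ (N - k) * (N.choose k : K)) := by
    rw [add_pow]
    refine Finset.sum_congr rfl fun k _ => ?_
    rw [MvPolynomial.monomial_pow, MvPolynomial.monomial_pow, MvPolynomial.monomial_mul,
      ← map_natCast (MvPolynomial.C (σ := Fin m) (R := K)), mul_comm _ (MvPolynomial.C _),
      MvPolynomial.C_mul_monomial, mul_comm (N.choose k : K)]
  have hcoeff : ∀ x, MvPolynomial.coeff x
      ((MvPolynomial.monomial α u1 + MvPolynomial.monomial β u2) ^ N) =
      ∑ k ∈ Finset.range (N + 1), if k • α + (N - k) • β = x then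
        (u1 ^ k * u2 ^ (N - k) * (N.choose k : K)) else 0 := by
    intro x
    rw [hexp, MvPolynomial.coeff_sum]
    simp only [MvPolynomial.coeff_monomial]
  rw [mem_frobeniusPower_iff]
  push Not
  simp only [MvPolynomial.mem_support_iff, hcoeff]
  constructor
  · rintro ⟨x, hx, hxq⟩
    obtain ⟨k, hk, hne⟩ := Finset.exists_ne_zero_of_sum_ne_zero hx
    rw [Finset.mem_range] at hk
    have hkN : k + (N - k) = N := by omega
    split_ifs at hne with hkx
    · refine ⟨k, N - k, hkN, ?_, fun i => ?_⟩
      · rw [hkN]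
        exact fun hd => hne (by rw [(CharP.cast_eq_zero_iff K p _).2 hd, mul_zero])
      · have := hxq i
        rw [← hkx] at this
        simpa [hα, hβ, mul_comm] using this
    · exact absurd rfl hne
  · rintro ⟨k, l, rfl, hnd, hlt⟩
    refine ⟨k • α + l • β, ?_, fun i => by simpa [hα, hβ, mul_comm] using hlt i⟩
    rw [Finset.sum_eq_single k]
    · rw [if_pos (by rw [Nat.add_sub_cancel_left])]
      refine mul_ne_zero (mul_ne_zero (pow_ne_zero _ hu1) (pow_ne_zero _ hu2)) ?_
      rwa [Ne, CharP.cast_eq_zero_iff K p]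
    · intro k' hk' hne
      rw [if_neg]
      intro heq
      obtain ⟨i, hi⟩ := Function.ne_iff.1 hab
      have h1 := DFunLike.congr_fun heq i
      simp only [hα, hβ, Finsupp.add_apply, Finsupp.smul_apply, smul_eq_mul,
        Finsupp.equivFunOnFinite_symm_apply_apply] at h1
      rw [Finset.mem_range] at hk'
      have h2 : k' ≤ k + l := by omega
      zify [h2] at h1
      have h3 : ((k' : ℤ) - k) * ((a i : ℤ) - b i) = 0 := by linear_combination h1
      rcases mul_eq_zero.1 h3 with h | h
      · exact hne (by omega)
      · exact hi (by omega)
    · intro h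
      exact absurd (Finset.mem_range.2 (by omega)) h

/-! ### Truncations and digits -/

/-- The numerators of the truncations of `α > 0`. -/
lemma exists_trunc_num (p : ℕ) (hp : 0 < p) (α : ℝ) (hα : 0 < α) :
    ∃ A : ℕ → ℕ, ∀ e, (A e : ℝ) < (p : ℝ) ^ e * α ∧ (p : ℝ) ^ e * α ≤ A e + 1 ∧
      trunc p e α = A e / (p : ℝ) ^ e := by
  have hp' : (0 : ℝ) < p := by exact_mod_cast hp
  refine ⟨fun e => (⌈(p : ℝ) ^ e * α⌉ - 1).toNat, fun e => ?_⟩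
  have hpos : 0 < (p : ℝ) ^ e * α := by positivity
  have h1 : 0 < ⌈(p : ℝ) ^ e * α⌉ := Int.ceil_pos.2 hpos
  have h2 : (((⌈(p : ℝ) ^ e * α⌉ - 1).toNat : ℕ) : ℝ) = (⌈(p : ℝ) ^ e * α⌉ : ℝ) - 1 := by
    have : (((⌈(p : ℝ) ^ e * α⌉ - 1).toNat : ℕ) : ℤ) = ⌈(p : ℝ) ^ e * α⌉ - 1 :=
      Int.toNat_of_nonneg (by omega)
    exact_mod_cast congrArg (Int.cast : ℤ → ℝ) this
  simp only [h2]
  refine ⟨by linarith [Int.ceil_lt_add_one ((p : ℝ) ^ e * α)],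
    by linarith [Int.le_ceil ((p : ℝ) ^ e * α)], ?_⟩
  rw [trunc, if_neg hα.ne']

lemma digit_eq_of_trunc (p : ℕ) (hp : 0 < p) (α : ℝ) (A : ℕ → ℕ)
    (hA : ∀ e, trunc p e α = A e / (p : ℝ) ^ e) (e : ℕ) :
    digit p (e + 1) α = (A (e + 1) : ℝ) - p * A e := by
  have hp' : (p : ℝ) ≠ 0 := by exact_mod_cast hp.ne'
  rw [digit, hA, Nat.add_sub_cancel, hA, pow_succ]
  field_simp

/-- The numerators of consecutive truncations differ by a digit in `{0, …, p - 1}`. -/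
lemma trunc_num_succ (p : ℕ) (hp : 0 < p) (α : ℝ) (A : ℕ → ℕ)
    (hA : ∀ e, (A e : ℝ) < (p : ℝ) ^ e * α ∧ (p : ℝ) ^ e * α ≤ A e + 1) (e : ℕ) :
    p * A e ≤ A (e + 1) ∧ A (e + 1) < p * A e + p := by
  have hp' : (0 : ℝ) < p := by exact_mod_cast hp
  obtain ⟨h1, h2⟩ := hA e
  obtain ⟨h3, h4⟩ := hA (e + 1)
  rw [pow_succ', mul_assoc] at h3 h4
  have h5 := mul_lt_mul_of_pos_left h1 hp'
  have h6 := mul_le_mul_of_nonneg_left h2 hp'.le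
  constructor
  · have : ((p * A e : ℕ) : ℝ) < ((A (e + 1) + 1 : ℕ) : ℝ) := by push_cast; linarith
    have := Nat.cast_lt.1 this
    omega
  · have : ((A (e + 1) : ℕ) : ℝ) < ((p * A e + p : ℕ) : ℝ) := by push_cast; linarith
    exact Nat.cast_lt.1 this

lemma digit_lt (p : ℕ) (hp : 0 < p) (α : ℝ) (hα : 0 ≤ α) (e : ℕ) :
    digit p (e + 1) α < p := by
  rcases hα.eq_or_lt with rfl | hα
  · simpa [digit, trunc] using hp
  · obtain ⟨A, hA⟩ := exists_trunc_num p hp α hα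
    rw [digit_eq_of_trunc p hp α A (fun e => (hA e).2.2)]
    have h := (trunc_num_succ p hp α A (fun e => ⟨(hA e).1, (hA e).2.1⟩) e).2
    have : ((A (e + 1) : ℕ) : ℝ) < ((p * A e + p : ℕ) : ℝ) := Nat.cast_lt.2 h
    push_cast at this
    linarith

lemma trunc_eq_of_bounds (p e T : ℕ) (α : ℝ) (hα : α ≠ 0) (h1 : (T : ℝ) < (p : ℝ) ^ e * α)
    (h2 : (p : ℝ) ^ e * α ≤ T + 1) : trunc p e α = T / (p : ℝ) ^ e := by
  have : ⌈(p : ℝ) ^ e * α⌉ = (T : ℤ) + 1 := by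
    rw [Int.ceil_eq_iff]; push_cast; exact ⟨by linarith, h2⟩
  rw [trunc, if_neg hα, this]; push_cast; ring

/-! ### Convexity of the splitting polytope -/

/-- Let `(x, y)` and `(w₁, w₂)` satisfy a linear inequality with bound `q`, strictly in the case of
`(x, y)`. If both coordinate sums are at least `X + Y` and `y ≤ Y < w₂`, then `(X, Y)` satisfies the
inequality strictly: it is dominated by the point of height `Y` on the segment joining the two. -/
lemma lt_of_segment {α β q x y w₁ w₂ X Y : ℝ} (hα : 0 ≤ α)
    (hz : α * x + β * y < q) (hw : α * w₁ + β * w₂ ≤ q)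
    (hzs : X + Y ≤ x + y) (hws : X + Y ≤ w₁ + w₂) (hy : y ≤ Y) (hY : Y < w₂) :
    α * X + β * Y < q := by
  have hc : 0 < w₂ - y := by linarith
  have hX : (w₂ - y) * X ≤ (w₂ - Y) * x + (Y - y) * w₁ := by
    have h1 := mul_le_mul_of_nonneg_left hzs (sub_nonneg.2 hY.le)
    have h2 := mul_le_mul_of_nonneg_left hws (sub_nonneg.2 hy)
    nlinarith
  have h3 := mul_lt_mul_of_pos_left hz (sub_pos.2 hY)
  have h4 := mul_le_mul_of_nonneg_left hw (sub_nonneg.2 hy)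
  have h5 := mul_le_mul_of_nonneg_left hX hα
  have h6 : (w₂ - y) * (α * X + β * Y) < (w₂ - y) * q := by nlinarith
  exact lt_of_mul_lt_mul_left h6 hc.le

/-- If neither `(A + 1, B) / q` nor `(A, B + 1) / q` is in the lower interior, with `(A, B)` strictly
below `q • η` for a maximal point `η`, then every lattice point `(k, l)` with `(k, l) / q` in the lower
interior satisfies `k + l ≤ A + B`. -/
lemma add_le_of_notMem {m : ℕ} (a b : Fin m → ℕ) (η : ℝ × ℝ) (hη : isMaxPoint a b η)
    (q A B : ℕ) (hq : 0 < q) (hA : (A : ℝ) < q * η.1) (hB : (B : ℝ) < q * η.2)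
    (h1 : ∃ i, q ≤ a i * (A + 1) + b i * B) (h2 : ∃ i, q ≤ a i * A + b i * (B + 1))
    (k l : ℕ) (hkl : ∀ i, a i * k + b i * l < q) : k + l ≤ A + B := by
  by_contra! hlt
  have hq' : (0 : ℝ) < q := by exact_mod_cast hq
  have hkl' : ∀ i, (a i : ℝ) * k + b i * l < q := fun i => by exact_mod_cast hkl i
  have hηP : ∀ i, (a i : ℝ) * (q * η.1) + b i * (q * η.2) ≤ q := fun i => by
    have := mul_le_mul_of_nonneg_left (hη.1.2.2 i) hq'.le
    linarith
  have hz : (A : ℝ) + B + 1 ≤ k + l := by exact_mod_cast hlt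
  have hmax : (k : ℝ) + l ≤ q * η.1 + q * η.2 := by
    have := hη.2 ((k : ℝ) / q, (l : ℝ) / q) ⟨by positivity, by positivity, fun i => by
      have : (a i : ℝ) * (k / q) + b i * (l / q) = (a i * k + b i * l) / q := by ring
      rw [this, div_le_one hq']
      exact (hkl' i).le⟩
    simp only [← add_div] at this
    rw [div_le_iff₀ hq'] at this
    linarith
  rcases le_or_gt l B with hl | hl
  · obtain ⟨i, hi⟩ := h1
    have := lt_of_segment (X := A + 1) (Y := B) (Nat.cast_nonneg (a i)) (hkl' i) (hηP i)
      (by linarith) (by linarith) (by exact_mod_cast hl) hB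
    have hi' : (q : ℝ) ≤ a i * (A + 1) + b i * B := by exact_mod_cast hi
    linarith
  obtain ⟨i, hi⟩ := h2
  rcases le_or_gt k A with hk | hk
  · have := lt_of_segment (X := B + 1) (Y := A) (Nat.cast_nonneg (b i))
      ((add_comm _ _).trans_lt (hkl' i)) ((add_comm _ _).trans_le (hηP i))
      (by linarith) (by linarith) (by exact_mod_cast hk) hA
    have hi' : (q : ℝ) ≤ a i * A + b i * (B + 1) := by exact_mod_cast hi
    linarith
  · have e1 := Nat.mul_le_mul_left (a i) hk.le
    have e2 := Nat.mul_le_mul_left (b i) (show B + 1 ≤ l from hl)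
    have e3 := hkl i
    omega

lemma exists_le_of_notMem_lowerInterior {m : ℕ} (a b : Fin m → ℕ) (q A B : ℕ) (hq : 0 < q)
    (h : ((A : ℝ) / q, (B : ℝ) / q) ∉ lowerInterior a b) : ∃ i, q ≤ a i * A + b i * B := by
  by_contra! hlt
  have hq' : (0 : ℝ) < q := by exact_mod_cast hq
  refine h ⟨by positivity, by positivity, fun i => ?_⟩
  have : (a i : ℝ) * (A / q) + b i * (B / q) = (a i * A + b i * B) / q := by ring
  rw [this, div_lt_one hq']
  exact_mod_cast hlt i

lemma mul_add_mul_div_lt {x y k l P Q : ℕ} (h : x * k + y * l < P * Q) :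
    x * (k / Q) + y * (l / Q) < P := by
  have h1 := Nat.mul_le_mul_left x (Nat.div_mul_le_self k Q)
  have h2 := Nat.mul_le_mul_left y (Nat.div_mul_le_self l Q)
  refine lt_of_mul_lt_mul_right (a := Q) ?_ (Nat.zero_le _)
  calc (x * (k / Q) + y * (l / Q)) * Q = x * (k / Q * Q) + y * (l / Q * Q) := by ring
    _ < P * Q := by omega

/-! ### The threshold -/

theorem stmt_15 {K : Type*} [Field K] (p : ℕ) [Fact p.Prime] [CharP K p]
    {m : ℕ} (a b : Fin m → ℕ) (hab : a ≠ b) (hvar : ∀ i, 1 ≤ a i + b i)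
    (u1 u2 : K) (hu1 : u1 ≠ 0) (hu2 : u2 ≠ 0)
    (η : ℝ × ℝ) (hη : isMaxPoint a b η) (huniq : ∀ s, isMaxPoint a b s → s = η)
    (hsum : η.1 + η.2 ≤ 1) (L : ℕ)
    (hL1 : ∀ e : ℕ, 1 ≤ e → e ≤ L → digit p e η.1 + digit p e η.2 ≤ (p : ℝ) - 1)
    (hL2 : (p : ℝ) ≤ digit p (L + 1) η.1 + digit p (L + 1) η.2)
    (d : ℕ) (hd1 : 1 ≤ d) (hdL : d ≤ L)
    (hd2 : digit p d η.1 + digit p d η.2 ≤ (p : ℝ) - 2)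
    (hdmax : ∀ e : ℕ, 1 ≤ e → e ≤ L →
      digit p e η.1 + digit p e η.2 ≤ (p : ℝ) - 2 → e ≤ d)
    (hnot : (trunc p d η.1 + 1 / (p : ℝ) ^ d, trunc p d η.2) ∉ lowerInterior a b ∧
            (trunc p d η.1, trunc p d η.2 + 1 / (p : ℝ) ^ d) ∉ lowerInterior a b) :
    Filter.Tendsto (fun e : ℕ =>
        (nu (MvPolynomial.C u1 * ∏ i, MvPolynomial.X i ^ a i +
             MvPolynomial.C u2 * ∏ i, MvPolynomial.X i ^ b i) (p ^ e) : ℝ) / (p : ℝ) ^ e)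
      Filter.atTop (nhds (trunc p L (η.1 + η.2))) := by
  have hp0 : 0 < p := (Fact.out : p.Prime).pos
  have hpR : (0 : ℝ) < p := by exact_mod_cast hp0
  -- A digit is at most `p - 1`, so digits summing to `p` are both positive; digits of `0` are `0`.
  have hη1 : 0 < η.1 := by
    refine lt_of_le_of_ne hη.1.1 fun h => ?_
    have h0 : digit p (L + 1) η.1 = 0 := by rw [← h]; simp [digit, trunc]
    linarith [digit_lt p hp0 η.2 hη.1.2.1 L]
  have hη2 : 0 < η.2 := by
    refine lt_of_le_of_ne hη.1.2.1 fun h => ?_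
    have h0 : digit p (L + 1) η.2 = 0 := by rw [← h]; simp [digit, trunc]
    linarith [digit_lt p hp0 η.1 hη.1.1 L]
  obtain ⟨A, hA⟩ := exists_trunc_num p hp0 η.1 hη1
  obtain ⟨B, hB⟩ := exists_trunc_num p hp0 η.2 hη2
  have hdA := digit_eq_of_trunc p hp0 η.1 A (fun e => (hA e).2.2)
  have hdB := digit_eq_of_trunc p hp0 η.2 B (fun e => (hB e).2.2)
  have hsA := trunc_num_succ p hp0 η.1 A (fun e => ⟨(hA e).1, (hA e).2.1⟩)
  have hsB := trunc_num_succ p hp0 η.2 B (fun e => ⟨(hB e).1, (hB e).2.1⟩)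
  have hdig : ∀ e, e < L → A (e + 1) + B (e + 1) + 1 ≤ p * (A e + B e + 1) := by
    intro e he
    have h := hL1 (e + 1) (by omega) (by omega)
    rw [hdA, hdB] at h
    have : ((A (e + 1) + B (e + 1) + 1 : ℕ) : ℝ) ≤ ((p * (A e + B e + 1) : ℕ) : ℝ) := by
      push_cast; linarith
    exact Nat.cast_le.1 this
  have hdig' : ∀ e, d ≤ e → e < L → A (e + 1) + B (e + 1) + 1 = p * (A e + B e + 1) := by
    intro e hde he
    refine le_antisymm (hdig e he) ?_
    by_contra! h
    have h' : ((A (e + 1) + B (e + 1) + 1 + 1 : ℕ) : ℝ) ≤ ((p * (A e + B e + 1) : ℕ) : ℝ) :=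
      Nat.cast_le.2 h
    push_cast at h'
    have := hdmax (e + 1) (by omega) (by omega) (by rw [hdA, hdB]; linarith)
    omega
  have hTd : ∀ n, d + n ≤ L → A (d + n) + B (d + n) + 1 = p ^ n * (A d + B d + 1) := by
    intro n
    induction n with
    | zero => intro _; simp
    | succ n ih =>
      intro h
      rw [← add_assoc, hdig' (d + n) (by omega) (by omega), ih (by omega), pow_succ']
      ring
  have hcarry : p * (A L + B L + 1) ≤ A (L + 1) + B (L + 1) := by
    have h := hL2
    rw [hdA, hdB] at h
    have : ((p * (A L + B L + 1) : ℕ) : ℝ) ≤ ((A (L + 1) + B (L + 1) : ℕ) : ℝ) := by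
      push_cast; linarith
    exact Nat.cast_le.1 this
  have hnc : ∀ e, e ≤ L → ¬ p ∣ (A e + B e).choose (A e) := by
    intro e
    induction e with
    | zero =>
      intro _
      have h1 : A 0 < 1 := by
        have h := (hA 0).1
        rw [pow_zero, one_mul] at h
        exact_mod_cast h.trans_le (show η.1 ≤ 1 by linarith)
      have h2 : A 0 = 0 := by omega
      rw [h2, Nat.choose_zero_right]
      exact (Fact.out : p.Prime).one_lt.ne' ∘ Nat.dvd_one.1
    | succ e ih =>
      intro he
      have h1 := hdig e (by omega)
      have h2 := hsA e
      have h3 := hsB e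
      obtain ⟨r, hr⟩ := Nat.exists_eq_add_of_le h2.1
      obtain ⟨s, hs⟩ := Nat.exists_eq_add_of_le h3.1
      have hexp : p * (A e + B e + 1) = p * A e + p * B e + p := by ring
      rw [not_dvd_choose_iff_div, hr, hs, Nat.mul_add_mod, Nat.mul_add_mod, Nat.mul_add_div hp0,
        Nat.mul_add_div hp0, Nat.mod_eq_of_lt (by omega), Nat.mod_eq_of_lt (by omega),
        Nat.div_eq_of_lt (by omega), Nat.div_eq_of_lt (by omega)]
      exact ⟨by omega, ih (by omega)⟩
  set T := A L + B L + 1 with hT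
  have hTlt : (T : ℝ) < (p : ℝ) ^ L * η.1 + (p : ℝ) ^ L * η.2 := by
    have h1 := (hA (L + 1)).1
    have h2 := (hB (L + 1)).1
    have h3 : (p : ℝ) * T ≤ A (L + 1) + B (L + 1) := by exact_mod_cast hcarry
    rw [pow_succ', mul_assoc] at h1 h2
    refine lt_of_mul_lt_mul_left (a := (p : ℝ)) ?_ hpR.le
    linarith
  have hTR : (T : ℝ) = A L + B L + 1 := by rw [hT]; push_cast; ring
  have htr : trunc p L (η.1 + η.2) = T / (p : ℝ) ^ L := by
    refine trunc_eq_of_bounds p L T _ (by linarith) (by linarith) ?_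
    linarith [(hA L).2.1, (hB L).2.1]
  have hlow : ∀ n, ∃ k l, k + l = p ^ n * T - 1 ∧ ¬ p ∣ (k + l).choose k ∧
      ∀ i, a i * k + b i * l < p ^ (L + n) := by
    intro n
    have hQ : (0 : ℝ) < (p : ℝ) ^ n := by positivity
    -- `r` is the largest natural number below `p ^ n * t`, where `t` is the scaled tail of `η.1`.
    set t : ℝ := (p : ℝ) ^ L * η.1 - A L with ht
    have ht0 : 0 < t := by linarith [(hA L).1]
    have ht1 : t ≤ 1 := by linarith [(hA L).2.1]
    have hc0 : 0 < ⌈(p : ℝ) ^ n * t⌉₊ := Nat.ceil_pos.2 (by positivity)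
    have hc1 : ⌈(p : ℝ) ^ n * t⌉₊ ≤ p ^ n := by
      rw [Nat.ceil_le]; push_cast; nlinarith
    obtain ⟨r, hr⟩ : ∃ r, ⌈(p : ℝ) ^ n * t⌉₊ = r + 1 := ⟨_, (Nat.sub_add_cancel hc0).symm⟩
    obtain ⟨s, hs⟩ := Nat.exists_eq_add_of_le hc1
    have hrR : (r : ℝ) < (p : ℝ) ^ n * t := by
      have := Nat.ceil_lt_add_one (show 0 ≤ (p : ℝ) ^ n * t by positivity)
      rw [hr] at this; push_cast at this; linarith
    have hsR : (p : ℝ) ^ n * t + s ≤ (p : ℝ) ^ n := by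
      have h1 := Nat.le_ceil ((p : ℝ) ^ n * t)
      have h2 : ((p : ℝ)) ^ n = ⌈(p : ℝ) ^ n * t⌉₊ + s := by exact_mod_cast hs
      linarith
    rw [hr] at hs
    have hk : ((p ^ n * A L + r : ℕ) : ℝ) < (p : ℝ) ^ (L + n) * η.1 := by
      push_cast; rw [pow_add]; rw [ht] at hrR; nlinarith
    have hl : ((p ^ n * B L + s : ℕ) : ℝ) < (p : ℝ) ^ (L + n) * η.2 := by
      push_cast; rw [pow_add]
      have := mul_lt_mul_of_pos_left hTlt hQ
      rw [hTR] at this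
      rw [ht] at hsR
      nlinarith
    refine ⟨p ^ n * A L + r, p ^ n * B L + s, ?_,
      not_dvd_choose_append p _ _ (hnc L le_rfl) n r s (by omega), fun i => ?_⟩
    · have : p ^ n * T = p ^ n * A L + p ^ n * B L + p ^ n := by rw [hT]; ring
      omega
    · have hP := mul_le_mul_of_nonneg_left (hη.1.2.2 i)
        (show (0 : ℝ) ≤ (p : ℝ) ^ (L + n) by positivity)
      have h1 := mul_le_mul_of_nonneg_left hk.le (Nat.cast_nonneg (α := ℝ) (a i))
      have h2 := mul_le_mul_of_nonneg_left hl.le (Nat.cast_nonneg (α := ℝ) (b i))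
      have hlt : (a i : ℝ) * (p ^ n * A L + r : ℕ) + b i * (p ^ n * B L + s : ℕ)
          < (p : ℝ) ^ (L + n) := by
        -- One of `a i`, `b i` is nonzero, which makes the inequality strict.
        rcases Nat.eq_zero_or_pos (a i) with h0 | h0
        · have hb : (0 : ℝ) < b i := by
            have := hvar i
            exact_mod_cast (show 0 < b i by omega)
          have := mul_lt_mul_of_pos_left hl hb
          linarith
        · have := mul_lt_mul_of_pos_left hk (show (0 : ℝ) < a i by exact_mod_cast h0)
          linarith
      exact_mod_cast hlt
  have hup : ∀ n k l, ¬ p ∣ (k + l).choose k → (∀ i, a i * k + b i * l < p ^ (L + n)) →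
      k + l < p ^ n * T := by
    intro n k l hch hlt
    by_contra! hge
    obtain ⟨j, rfl⟩ := Nat.exists_eq_add_of_le hdL
    obtain ⟨-, hsum'⟩ := not_dvd_choose_div_pow p (j + n) k l hch
    have hge' : A d + B d + 1 ≤ (k + l) / p ^ (j + n) := by
      rw [Nat.le_div_iff_mul_le (by positivity)]
      calc (A d + B d + 1) * p ^ (j + n) = p ^ n * T := by
            rw [hT, hTd j le_rfl, pow_add]; ring
        _ ≤ k + l := hge
    rw [hsum'] at hge'
    have hlt' : ∀ i, a i * (k / p ^ (j + n)) + b i * (l / p ^ (j + n)) < p ^ d := fun i => by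
      refine mul_add_mul_div_lt ?_
      rw [← pow_add, ← add_assoc]
      exact hlt i
    obtain ⟨hn1, hn2⟩ := hnot
    rw [(hA d).2.2, (hB d).2.2] at hn1 hn2
    have hq : 0 < p ^ d := by positivity
    have := add_le_of_notMem a b η hη (p ^ d) (A d) (B d) hq
      (by push_cast; exact (hA d).1) (by push_cast; exact (hB d).1)
      (exists_le_of_notMem_lowerInterior a b (p ^ d) (A d + 1) (B d) hq
        (by push_cast; rwa [add_div]))
      (exists_le_of_notMem_lowerInterior a b (p ^ d) (A d) (B d + 1) hq
        (by push_cast; rwa [add_div]))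
      _ _ hlt'
    omega
  have hnu : ∀ n, nu (MvPolynomial.C u1 * ∏ i, MvPolynomial.X i ^ a i +
      MvPolynomial.C u2 * ∏ i, MvPolynomial.X i ^ b i) (p ^ (L + n)) = p ^ n * T - 1 := by
    intro n
    refine IsGreatest.csSup_eq ⟨?_, ?_⟩
    · exact (pow_notMem_frobeniusPower_iff p a b hab u1 u2 hu1 hu2 _ _).2 (hlow n)
    · intro N hN
      obtain ⟨k, l, rfl, h1, h2⟩ :=
        (pow_notMem_frobeniusPower_iff p a b hab u1 u2 hu1 hu2 _ _).1 hN
      have := hup n k l h1 h2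
      omega
  have hlim : Filter.Tendsto (fun e : ℕ => (T : ℝ) / (p : ℝ) ^ L - ((p : ℝ)⁻¹) ^ e)
      Filter.atTop (nhds (T / (p : ℝ) ^ L - 0)) :=
    tendsto_const_nhds.sub (tendsto_pow_atTop_nhds_zero_of_lt_one (by positivity)
      (inv_lt_one_of_one_lt₀ (by exact_mod_cast (Fact.out : p.Prime).one_lt)))
  rw [htr]
  rw [sub_zero] at hlim
  refine hlim.congr' ?_
  filter_upwards [Filter.eventually_ge_atTop L] with e he
  obtain ⟨n, rfl⟩ := Nat.exists_eq_add_of_le he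
  have hpos : 1 ≤ p ^ n * T := Nat.succ_le_of_lt (Nat.mul_pos (by positivity) (by omega))
  rw [hnu, Nat.cast_sub hpos, inv_pow, pow_add]
  push_cast
  field_simp
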